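/- Let G be a unicyclic graph on n vertices and x ∈ V(G). Then n+1 ≤ RC(x) ≤ n(n−1)(4n+1)/6 − 9. The lower bound holds with equality if and only if G ≅ S_n^3 and deg(x) = n−1; the upper bound holds with equality if and only if G ≅ P_n^3 and x is the vertex with d(x, V(C_3)) = n−3. -/

import Mathlib

open SimpleGraph Finset

attribute [local instance] Classical.propDecidable

variable {V : Type*}

/-- Degree of a vertex as a real number. -/
noncomputable def degR [Fintype V] (G : SimpleGraph V) (x : V) : ℝ :=
  ((Finset.univ.filter fun y => G.Adj x y).card : ℝ)

/-- Number of edges of a graph. -/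
noncomputable def esize (G : SimpleGraph V) : ℕ := Nat.card G.edgeSet

/-- Dirichlet energy of a potential. -/
noncomputable def energyFn [Fintype V] (G : SimpleGraph V) (φ : V → ℝ) : ℝ :=
  (1/2) * ∑ u, ∑ v, if G.Adj u v then (φ u - φ v)^2 else 0

/-- Effective resistance between two vertices (unit resistors on edges),
via the Dirichlet variational principle: the reciprocal of the minimal energy
of a potential with value 1 at `x` and 0 at `y`. -/
noncomputable def eres [Fintype V] (G : SimpleGraph V) (x y : V) : ℝ :=
  (sInf {e : ℝ | ∃ φ : V → ℝ, φ x = 1 ∧ φ y = 0 ∧ e = energyFn G φ})⁻¹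

/-- The transition matrix of the simple random walk, killed at `y`. -/
noncomputable def hitMat [Fintype V] (G : SimpleGraph V) (y : V) : Matrix V V ℝ :=
  Matrix.of fun u v => if v = y then 0 else if G.Adj u v then (degR G u)⁻¹ else 0

/-- Expected hitting time `H_{xy}` of the simple random walk from `x` to `y`,
expressed as the sum of the survival probabilities of the walk killed at `y`. -/
noncomputable def hitting [Fintype V] (G : SimpleGraph V) (x y : V) : ℝ :=
  if x = y then 0 else ∑' k : ℕ, ∑ z, (hitMat G y ^ k) x z

/-- Resistance-centrality `R(x)`. -/
noncomputable def Rres [Fintype V] (G : SimpleGraph V) (x : V) : ℝ := ∑ y, eres G x y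

/-- Weighted resistance-centrality `R^w(x)`. -/
noncomputable def Rw [Fintype V] (G : SimpleGraph V) (x : V) : ℝ :=
  ∑ y, degR G y * eres G x y

/-- Kirchhoff index `Kf(G)`. -/
noncomputable def Kf [Fintype V] (G : SimpleGraph V) : ℝ :=
  (1/2) * ∑ x, ∑ y, eres G x y

/-- Additive degree-Kirchhoff index `Kf⁺(G)`. -/
noncomputable def KfPlus [Fintype V] (G : SimpleGraph V) : ℝ :=
  (1/2) * ∑ x, ∑ y, (degR G x + degR G y) * eres G x y

/-- Multiplicative degree-Kirchhoff index `Kf*(G)`. -/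
noncomputable def KfStar [Fintype V] (G : SimpleGraph V) : ℝ :=
  (1/2) * ∑ x, ∑ y, degR G x * degR G y * eres G x y

/-- Cover cost `CC(x) = Σ_y H_{xy}`. -/
noncomputable def coverCost [Fintype V] (G : SimpleGraph V) (x : V) : ℝ :=
  ∑ y, hitting G x y

/-- Reverse cover cost `RC(x) = Σ_y H_{yx}`. -/
noncomputable def reverseCoverCost [Fintype V] (G : SimpleGraph V) (x : V) : ℝ :=
  ∑ y, hitting G y x

/-- Centrality (transmission) `D(x) = Σ_y d(x,y)`. -/
noncomputable def Dcent [Fintype V] (G : SimpleGraph V) (x : V) : ℝ :=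
  ∑ y, (G.dist x y : ℝ)

/-- Weighted centrality `D^w(x) = Σ_y deg(y)·d(x,y)`. -/
noncomputable def Dw [Fintype V] (G : SimpleGraph V) (x : V) : ℝ :=
  ∑ y, degR G y * (G.dist x y : ℝ)

/-- Wiener index `W(G)`. -/
noncomputable def Wiener [Fintype V] (G : SimpleGraph V) : ℝ :=
  (1/2) * ∑ x, ∑ y, (G.dist x y : ℝ)

/-- `D_{T}(v)`: sum of distances from `v` to the vertices of its connected
component in `G'` (used for the branch trees of a unicyclic graph). -/
noncomputable def branchD [Fintype V] (G' : SimpleGraph V) (v : V) : ℝ :=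
  ∑ u, if G'.Reachable v u then (G'.dist v u : ℝ) else 0

/-- The set of edges of the cycle `c 0 - c 1 - ⋯ - c (l-1) - c 0`. -/
def cycleEdges {l : ℕ} [NeZero l] (c : Fin l → V) : Set (Sym2 V) :=
  Set.range fun i : Fin l => s(c i, c (i + 1))

/-- Distance from a vertex to a set of vertices. -/
noncomputable def distToSet [Fintype V] (G : SimpleGraph V) (x : V) (s : Set V) : ℕ :=
  sInf {d | ∃ y ∈ s, G.dist x y = d}

/-- `v` is the center of a star. -/
def IsStarCenter (G : SimpleGraph V) (v : V) : Prop := ∀ u, u ≠ v → G.Adj v u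

/-- `G` is a star. -/
def IsStar (G : SimpleGraph V) : Prop := ∃ v, IsStarCenter G v

/-- The lollipop graph `P_n^l` : a cycle `C_l` on `0,…,l-1` together with a
path on `l,…,n-1` attached at the cycle vertex `0`. -/
def lollipop (n l : ℕ) : SimpleGraph (Fin n) :=
  SimpleGraph.fromRel (fun a b =>
    (a.val + 1 = b.val ∧ b.val < l) ∨ (a.val = 0 ∧ b.val = l - 1) ∨
    (a.val = 0 ∧ b.val = l) ∨ (l ≤ a.val ∧ a.val + 1 = b.val))

/-- The graph `S_n^l` : a cycle `C_l` on `0,…,l-1` with `n - l` pendant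
vertices `l,…,n-1` attached at the cycle vertex `0`. -/
def starCycle (n l : ℕ) : SimpleGraph (Fin n) :=
  SimpleGraph.fromRel (fun a b =>
    (a.val + 1 = b.val ∧ b.val < l) ∨ (a.val = 0 ∧ b.val = l - 1) ∨
    (a.val = 0 ∧ l ≤ b.val))

/-- The cycle graph `C_n` on `Fin n`. -/
def cycleG (n : ℕ) : SimpleGraph (Fin n) :=
  SimpleGraph.fromRel (fun a b => a.val + 1 = b.val ∨ (a.val = 0 ∧ b.val = n - 1))


theorem rc_minP [Fintype V] (G : SimpleGraph V) (hc : G.Connected) (x : V) (f : V → ℝ)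
    (hx : 0 ≤ f x)
    (hf : ∀ u, u ≠ x → 0 ≤ ∑ v, if G.Adj u v then f u - f v else 0) : ∀ u, 0 ≤ f u := by
  have : Nonempty V := ⟨x⟩
  obtain ⟨m, hm⟩ := Finite.exists_min f
  by_contra hcon
  push Not at hcon
  obtain ⟨u0, hu0⟩ := hcon
  have hneg : f m < 0 := lt_of_le_of_lt (hm u0) hu0
  have step : ∀ u v, G.Adj u v → f u = f m → f v = f m := by
    intro u v huv hu
    have hux : u ≠ x := by rintro rfl; linarith
    have h1 := hf u hux
    have h2 : ∀ z ∈ Finset.univ, (if G.Adj u z then f u - f z else 0) ≤ 0 := by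
      intro z _
      split_ifs
      · have := hm z; linarith
      · exact le_rfl
    have h3 : ∑ z, (if G.Adj u z then f u - f z else 0) = 0 :=
      le_antisymm (Finset.sum_nonpos h2) h1
    have h4 := (Finset.sum_eq_zero_iff_of_nonpos h2).1 h3 v (Finset.mem_univ v)
    rw [if_pos huv] at h4
    linarith
  have walk : ∀ u v, G.Walk u v → f u = f m → f v = f m := by
    intro u v p
    induction p with
    | nil => exact id
    | cons h p ih => intro hu; exact ih (step _ _ h hu)
  obtain ⟨p⟩ := hc.preconnected m x
  have := walk _ _ p rfl
  linarith

theorem rc_uniq [Fintype V] (G : SimpleGraph V) (hc : G.Connected) (x : V) (f g : V → ℝ)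
    (hx : f x = g x)
    (hf : ∀ u, u ≠ x → (∑ v, if G.Adj u v then f u - f v else 0) =
      ∑ v, if G.Adj u v then g u - g v else 0) : f = g := by
  have e : ∀ u, (∑ v, if G.Adj u v then (f u - g u) - (f v - g v) else 0) =
      (∑ v, if G.Adj u v then f u - f v else 0) - ∑ v, if G.Adj u v then g u - g v else 0 := by
    intro u
    rw [← Finset.sum_sub_distrib]
    refine Finset.sum_congr rfl fun v _ => ?_
    split_ifs <;> ring
  have e' : ∀ u, (∑ v, if G.Adj u v then (g u - f u) - (g v - f v) else 0) =
      (∑ v, if G.Adj u v then g u - g v else 0) - ∑ v, if G.Adj u v then f u - f v else 0 := by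
    intro u
    rw [← Finset.sum_sub_distrib]
    refine Finset.sum_congr rfl fun v _ => ?_
    split_ifs <;> ring
  have h1 := rc_minP G hc x (fun u => f u - g u) (by simp [hx])
    (fun u hu => by rw [e u, hf u hu]; simp)
  have h2 := rc_minP G hc x (fun u => g u - f u) (by simp [hx])
    (fun u hu => by rw [e' u, hf u hu]; simp)
  funext u
  have := h1 u
  have := h2 u
  linarith

theorem rc_exists [Fintype V] (G : SimpleGraph V) (hc : G.Connected) (x : V) :
    ∃ f : V → ℝ, f x = 0 ∧ ∀ u, u ≠ x →
      (∑ v, if G.Adj u v then f u - f v else 0) = degR G u := by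
  let T : (V → ℝ) →ₗ[ℝ] (V → ℝ) :=
    { toFun := fun f u => if u = x then f x else ∑ v, if G.Adj u v then f u - f v else 0
      map_add' := by
        intro f g
        funext u
        simp only [Pi.add_apply]
        split_ifs with h
        · rfl
        · rw [← Finset.sum_add_distrib]
          refine Finset.sum_congr rfl fun v _ => ?_
          split_ifs <;> ring
      map_smul' := by
        intro c f
        funext u
        simp only [Pi.smul_apply, smul_eq_mul, RingHom.id_apply]
        split_ifs with h
        · rfl
        · rw [Finset.mul_sum]
          refine Finset.sum_congr rfl fun v _ => ?_
          split_ifs <;> ring }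
  have hT : ∀ f u, T f u = if u = x then f x else ∑ v, if G.Adj u v then f u - f v else 0 :=
    fun f u => rfl
  have inj : Function.Injective T := by
    intro f g hfg
    apply rc_uniq G hc x
    · have := congrFun hfg x
      simpa [hT] using this
    · intro u hu
      have := congrFun hfg u
      rw [hT, hT, if_neg hu, if_neg hu] at this
      exact this
  obtain ⟨f, hf⟩ := (LinearMap.injective_iff_surjective.1 inj)
    (fun u => if u = x then 0 else degR G u)
  refine ⟨f, ?_, ?_⟩
  · have := congrFun hf x
    simpa [hT] using this
  · intro u hu
    have := congrFun hf u
    rw [hT, if_neg hu, if_neg hu] at this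
    exact this

theorem rc_deg_pos [Fintype V] (G : SimpleGraph V) (hc : G.Connected) (x u : V) (hu : u ≠ x) :
    0 < degR G u := by
  unfold degR
  obtain ⟨p⟩ := hc.preconnected u x
  cases p with
  | nil => exact absurd rfl hu
  | cons h p =>
    have : 0 < (Finset.univ.filter fun y => G.Adj u y).card :=
      Finset.card_pos.2 ⟨_, by simpa using h⟩
    exact_mod_cast this

theorem rc_sum_one [Fintype V] (G : SimpleGraph V) (u : V) :
    (∑ v, if G.Adj u v then (1:ℝ) else 0) = degR G u := by
  unfold degR
  simp

theorem rc_hit [Fintype V] (G : SimpleGraph V) (hc : G.Connected) (x : V) (f : V → ℝ)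
    (hx : f x = 0)
    (hf : ∀ u, u ≠ x → (∑ v, if G.Adj u v then f u - f v else 0) = degR G u) (u : V) :
    hitting G u x = f u := by
  have hf0 : ∀ u, 0 ≤ f u := rc_minP G hc x f hx.ge
    (fun u hu => by rw [hf u hu]; exact (rc_deg_pos G hc x u hu).le)
  set s : ℕ → V → ℝ := fun k u => ∑ z, (hitMat G x ^ k) u z with hs
  have s0 : ∀ u, s 0 u = 1 := by
    intro u
    simp [hs, Matrix.one_apply]
  have sS : ∀ k u, s (k+1) u = ∑ v, hitMat G x u v * s k v := by
    intro k u
    simp only [hs, pow_succ', Matrix.mul_apply, Finset.mul_sum]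
    rw [Finset.sum_comm]
  have Mnn : ∀ u v, 0 ≤ hitMat G x u v := by
    intro u v
    simp only [hitMat, Matrix.of_apply]
    split_ifs
    · exact le_rfl
    · unfold degR; positivity
    · exact le_rfl
  have Mx : ∀ u, hitMat G x u x = 0 := by intro u; simp [hitMat]
  have Mf : ∀ g : V → ℝ, g x = 0 → ∀ u, u ≠ x → degR G u * ∑ v, hitMat G x u v * g v =
      ∑ v, if G.Adj u v then g v else 0 := by
    intro g hg u hu
    have hd := rc_deg_pos G hc x u hu
    rw [Finset.mul_sum]
    refine Finset.sum_congr rfl fun v _ => ?_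
    simp only [hitMat, Matrix.of_apply]
    split_ifs with h1 h2 h3
    · subst h1; simp [hg]
    · simp
    · field_simp
    · simp
  have expand : ∀ (g : V → ℝ) u, (∑ v, if G.Adj u v then g u - g v else 0) =
      degR G u * g u - ∑ v, if G.Adj u v then g v else 0 := by
    intro g u
    rw [← rc_sum_one, Finset.sum_mul, ← Finset.sum_sub_distrib]
    refine Finset.sum_congr rfl fun v _ => ?_
    split_ifs <;> ring
  have hfM : ∀ u, u ≠ x → f u = 1 + ∑ v, hitMat G x u v * f v := by
    intro u hu
    have hd := rc_deg_pos G hc x u hu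
    have h1 := hf u hu
    rw [expand, ← Mf f hx u hu] at h1
    have : degR G u * (f u - (1 + ∑ v, hitMat G x u v * f v)) = 0 := by linarith
    rcases mul_eq_zero.1 this with h | h
    · linarith
    · linarith
  have snn : ∀ k u, 0 ≤ s k u := by
    intro k
    induction k with
    | zero => intro u; rw [s0]; norm_num
    | succ k ih => intro u; rw [sS]; exact Finset.sum_nonneg fun v _ => mul_nonneg (Mnn u v) (ih v)
  have part : ∀ K u, u ≠ x → ∑ k ∈ Finset.range K, s k u ≤ f u := by
    intro K
    induction K with
    | zero => intro u _; simpa using hf0 u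
    | succ K ih =>
      intro u hu
      rw [Finset.sum_range_succ', s0, hfM u hu]
      have : ∑ k ∈ Finset.range K, s (k+1) u = ∑ v, hitMat G x u v * ∑ k ∈ Finset.range K, s k v := by
        simp only [sS, Finset.mul_sum]
        rw [Finset.sum_comm]
      rw [this]
      have : ∑ v, hitMat G x u v * ∑ k ∈ Finset.range K, s k v ≤ ∑ v, hitMat G x u v * f v := by
        refine Finset.sum_le_sum fun v _ => ?_
        by_cases hv : v = x
        · subst hv; simp [Mx]
        · exact mul_le_mul_of_nonneg_left (ih v hv) (Mnn u v)
      linarith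
  have summ : ∀ u, u ≠ x → Summable fun k => s k u := fun u hu =>
    summable_of_sum_range_le (fun k => snn k u) (fun K => part K u hu)
  set h : V → ℝ := fun u => hitting G u x with hh
  have hhx : h x = 0 := by simp [hh, hitting]
  have hht : ∀ u, u ≠ x → h u = ∑' k, s k u := by
    intro u hu
    simp [hh, hitting, hu, hs]
  have hhM : ∀ u, u ≠ x → h u = 1 + ∑ v, hitMat G x u v * h v := by
    intro u hu
    rw [hht u hu, (summ u hu).tsum_eq_zero_add, s0]
    congr 1
    have h1 : ∀ v, HasSum (fun k => hitMat G x u v * s k v) (hitMat G x u v * h v) := by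
      intro v
      by_cases hv : v = x
      · subst hv; simp only [Mx, zero_mul]; exact hasSum_zero
      · rw [hht v hv]; exact (summ v hv).hasSum.mul_left _
    have h2 := hasSum_sum (s := Finset.univ) (fun v _ => h1 v)
    rw [← h2.tsum_eq]
    simp only [sS]
  have : h = f := by
    apply rc_uniq G hc x
    · rw [hhx, hx]
    · intro v hv
      rw [hf v hv, expand, ← Mf h hhx v hv]
      have := hhM v hv
      have h3 : ∑ z, hitMat G x v z * h z = h v - 1 := by linarith
      rw [h3]; ring
  exact congrFun this u

theorem rc_cut (n k : ℕ) (hk : 1 ≤ k) (hkn : k ≤ n) (w : ℕ → ℕ → ℕ) (g : ℕ → ℝ)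
    (hsym : ∀ i j, w i j = w j i) (hdiag : ∀ i, w i i = 0)
    (heq : ∀ i, 1 ≤ i → i < n → ∑ j ∈ range n, (w i j : ℝ) * (g i - g j - 1) = 0) :
    ∑ i ∈ Ico k n, ∑ j ∈ range k, (w i j : ℝ) * (g i - g j) =
      2 * ((∑ i ∈ Ico k n, ∑ j ∈ range i, w i j : ℕ) : ℝ)
        - ((∑ i ∈ Ico k n, ∑ j ∈ range k, w i j : ℕ) : ℝ) := by
  -- sums over the square
  have tri : ∀ N, k ≤ N → (∑ i ∈ Ico k N, ∑ j ∈ Ico k N, w i j) =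
      2 * ∑ i ∈ Ico k N, ∑ j ∈ Ico k i, w i j := by
    intro N hN
    induction N, hN using Nat.le_induction with
    | base => simp
    | succ N hN ih =>
      rw [Finset.sum_Ico_succ_top hN, Finset.sum_Ico_succ_top (f := fun i => ∑ j ∈ Ico k i, w i j) hN,
        mul_add, ← ih]
      simp only [Finset.sum_Ico_succ_top hN]
      rw [Finset.sum_add_distrib, hdiag]
      have : ∑ i ∈ Ico k N, w i N = ∑ j ∈ Ico k N, w N j :=
        Finset.sum_congr rfl fun i _ => hsym _ _
      rw [this]; ring
  have anti : ∑ i ∈ Ico k n, ∑ j ∈ Ico k n, (w i j : ℝ) * (g i - g j) = 0 := by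
    have h1 : ∑ i ∈ Ico k n, ∑ j ∈ Ico k n, (w i j : ℝ) * (g i - g j) =
        - ∑ i ∈ Ico k n, ∑ j ∈ Ico k n, (w i j : ℝ) * (g i - g j) := by
      conv_lhs => rw [Finset.sum_comm]
      rw [← Finset.sum_neg_distrib]
      refine Finset.sum_congr rfl fun i _ => ?_
      rw [← Finset.sum_neg_distrib]
      refine Finset.sum_congr rfl fun j _ => ?_
      rw [hsym j i]; ring
    linarith
  have h0 : ∑ i ∈ Ico k n, ∑ j ∈ range n, (w i j : ℝ) * (g i - g j - 1) = 0 :=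
    Finset.sum_eq_zero fun i hi => heq i (by have := (Finset.mem_Ico.1 hi).1; omega)
      (Finset.mem_Ico.1 hi).2
  have split : ∀ (F : ℕ → ℕ → ℝ), ∑ i ∈ Ico k n, ∑ j ∈ range n, F i j =
      (∑ i ∈ Ico k n, ∑ j ∈ range k, F i j) + ∑ i ∈ Ico k n, ∑ j ∈ Ico k n, F i j := by
    intro F
    rw [← Finset.sum_add_distrib]
    refine Finset.sum_congr rfl fun i _ => ?_
    rw [Finset.sum_range_add_sum_Ico _ hkn]
  have hB : (∑ i ∈ Ico k n, ∑ j ∈ range i, w i j) =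
      (∑ i ∈ Ico k n, ∑ j ∈ range k, w i j) + ∑ i ∈ Ico k n, ∑ j ∈ Ico k i, w i j := by
    rw [← Finset.sum_add_distrib]
    refine Finset.sum_congr rfl fun i hi => ?_
    rw [Finset.sum_range_add_sum_Ico _ (Finset.mem_Ico.1 hi).1]
  rw [split] at h0
  have e : ∀ i j, (w i j : ℝ) * (g i - g j - 1) = (w i j : ℝ) * (g i - g j) - (w i j : ℝ) := by
    intro i j; ring
  simp only [e, Finset.sum_sub_distrib] at h0
  rw [anti] at h0
  have t := tri n hkn
  have t' : (∑ i ∈ Ico k n, ∑ j ∈ Ico k n, (w i j : ℝ)) =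
      2 * ((∑ i ∈ Ico k n, ∑ j ∈ Ico k i, w i j : ℕ) : ℝ) := by exact_mod_cast t
  rw [hB]
  rw [t'] at h0
  push_cast at h0 ⊢
  linarith

theorem rc_cut_le (n k : ℕ) (hk : 1 ≤ k) (hkn : k ≤ n) (w : ℕ → ℕ → ℕ) (g : ℕ → ℝ)
    (hsym : ∀ i j, w i j = w j i) (hdiag : ∀ i, w i i = 0)
    (mono : ∀ i j, i ≤ j → j < n → g i ≤ g j)
    (heq : ∀ i, 1 ≤ i → i < n → ∑ j ∈ range n, (w i j : ℝ) * (g i - g j - 1) = 0) :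
    ((∑ i ∈ Ico k n, ∑ j ∈ range k, w i j : ℕ) : ℝ) * (g k - g (k-1)) ≤
      2 * ((∑ i ∈ Ico k n, ∑ j ∈ range i, w i j : ℕ) : ℝ)
        - ((∑ i ∈ Ico k n, ∑ j ∈ range k, w i j : ℕ) : ℝ) := by
  rw [← rc_cut n k hk hkn w g hsym hdiag heq]
  push_cast
  rw [Finset.sum_mul]
  refine Finset.sum_le_sum fun i hi => ?_
  rw [Finset.sum_mul]
  refine Finset.sum_le_sum fun j hj => ?_
  rw [Finset.mem_Ico] at hi
  rw [Finset.mem_range] at hj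
  have h1 := mono k i hi.1 hi.2
  have h2 := mono j (k-1) (by omega) (by omega)
  exact mul_le_mul_of_nonneg_left (by linarith) (Nat.cast_nonneg _)

theorem rc_formula (m : ℕ) : (∑ j ∈ range (m+1), (j:ℝ) * (2*m+8-j)) + 3 * (m * (2*m+8-m)) + 25
    = ((m+4 : ℕ) : ℝ) * (((m+4 : ℕ) : ℝ)-1)*(4*((m+4 : ℕ) : ℝ)+1)/6 - 9 := by
  have : ∀ a : ℝ, ∀ M : ℕ, (∑ j ∈ range (M+1), (j:ℝ) * (a-j)) =
      a * (M*(M+1)/2) - M*(M+1)*(2*M+1)/6 := by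
    intro a M
    induction M with
    | zero => simp
    | succ M ih => rw [Finset.sum_range_succ, ih]; push_cast; ring
  rw [this]; push_cast; ring

theorem rc_key3 (w : ℕ → ℕ → ℕ) (g : ℕ → ℝ)
    (hsym : ∀ i j, w i j = w j i) (hw : ∀ i j, w i j ≤ 1) (hdiag : ∀ i, w i i = 0)
    (g0 : g 0 = 0)
    (heq : ∀ i, 1 ≤ i → i < 3 → ∑ j ∈ range 3, (w i j : ℝ) * (g i - g j - 1) = 0)
    (htot : ∑ i ∈ range 3, ∑ j ∈ range i, w i j = 3) :
    ∑ i ∈ range 3, g i = 4 ∧ w 1 0 = 1 ∧ w 2 0 = 1 ∧ w 2 1 = 1 := by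
  simp only [Finset.sum_range_succ, Finset.sum_range_zero] at htot ⊢
  have a := hw 1 0
  have b := hw 2 0
  have c := hw 2 1
  have h1 : w 1 0 = 1 := by omega
  have h2 : w 2 0 = 1 := by omega
  have h3 : w 2 1 = 1 := by omega
  have e1 := heq 1 (by norm_num) (by norm_num)
  have e2 := heq 2 (by norm_num) (by norm_num)
  simp only [Finset.sum_range_succ, Finset.sum_range_zero, hsym 1 2, h1, h2, h3, hdiag] at e1 e2
  push_cast at e1 e2
  refine ⟨?_, h1, h2, h3⟩
  linarith

theorem rc_key (m : ℕ) (w : ℕ → ℕ → ℕ) (g : ℕ → ℝ)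
    (hsym : ∀ i j, w i j = w j i) (hw : ∀ i j, w i j ≤ 1) (hdiag : ∀ i, w i i = 0)
    (g0 : g 0 = 0)
    (mono : ∀ i j, i ≤ j → j < m+4 → g i ≤ g j)
    (heq : ∀ i, 1 ≤ i → i < m+4 → ∑ j ∈ range (m+4), (w i j : ℝ) * (g i - g j - 1) = 0)
    (hb : ∀ i, 1 ≤ i → i < m+4 → 1 ≤ ∑ j ∈ range i, w i j)
    (htot : ∑ i ∈ range (m+4), ∑ j ∈ range i, w i j = m+4) :
    ∑ i ∈ range (m+4), g i ≤ 
      ((m+4 : ℕ) : ℝ) * (((m+4 : ℕ) : ℝ)-1)*(4*((m+4 : ℕ) : ℝ)+1)/6 - 9 ∧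
    (∑ i ∈ range (m+4), g i = 
      ((m+4 : ℕ) : ℝ) * (((m+4 : ℕ) : ℝ)-1)*(4*((m+4 : ℕ) : ℝ)+1)/6 - 9 →
      w (m+3) (m+2) = 1 ∧ w (m+2) (m+1) = 1 ∧ w (m+3) (m+1) = 1 ∧
      ∀ k, 1 ≤ k → k ≤ m+1 → ∑ i ∈ Ico k (m+4), ∑ j ∈ range k, w i j = 1) := by
  set b : ℕ → ℕ := fun i => ∑ j ∈ range i, w i j with hbdef
  set B : ℕ → ℕ := fun k => ∑ i ∈ Ico k (m+4), ∑ j ∈ range i, w i j with hB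
  set C : ℕ → ℕ := fun k => ∑ i ∈ Ico k (m+4), ∑ j ∈ range k, w i j with hC
  have cut : ∀ k, 1 ≤ k → k ≤ m+4 → (C k : ℝ) * (g k - g (k-1)) ≤ 2 * (B k : ℝ) - (C k : ℝ) :=
    fun k h1 h2 => rc_cut_le (m+4) k h1 h2 w g hsym hdiag mono heq
  have Bsum : ∀ k, k ≤ m+4 → (∑ i ∈ range k, b i) + B k = m+4 := by
    intro k hk
    rw [← htot]
    exact Finset.sum_range_add_sum_Ico _ hk
  have blow : ∀ k, k + 1 ≤ m+4 → k ≤ ∑ i ∈ range (k+1), b i := by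
    intro k hk
    induction k with
    | zero => simp
    | succ k ih =>
      rw [Finset.sum_range_succ]
      have := ih (by omega)
      have := hb (k+1) (by omega) (by omega)
      have e : b (k+1) = ∑ j ∈ range (k+1), w (k+1) j := rfl
      omega
  have Bup : ∀ k, k + 1 ≤ m+4 → B (k+1) ≤ m+4-k := by
    intro k hk
    have := Bsum (k+1) hk
    have := blow k hk
    omega
  have Cpos : ∀ k, 1 ≤ k → k < m+4 → 1 ≤ C k := by
    intro k h1 h2
    refine le_trans (hb k h1 h2) ?_
    exact Finset.single_le_sum (f := fun i => ∑ j ∈ range k, w i j) (fun _ _ => Nat.zero_le _)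
      (Finset.mem_Ico.2 ⟨le_rfl, h2⟩)
  have step : ∀ k, k + 1 < m+4 → g (k+1) - g k ≤ 2*((m:ℝ)+4-k) - 1 ∧
      (g (k+1) - g k = 2*((m:ℝ)+4-k) - 1 → C (k+1) = 1) := by
    intro k hk
    have h1 := cut (k+1) (by omega) (by omega)
    have h2 := Bup k (by omega)
    have h3 := Cpos (k+1) (by omega) (by omega)
    have h4 := mono k (k+1) (by omega) (by omega)
    simp only [Nat.add_sub_cancel] at h1
    have h2' : (B (k+1) : ℝ) ≤ (m:ℝ)+4-k := by
      have : ((B (k+1) + k : ℕ) : ℝ) ≤ ((m+4 : ℕ) : ℝ) := by exact_mod_cast (by omega)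
      push_cast at this; linarith
    have h3' : (1:ℝ) ≤ (C (k+1) : ℝ) := by exact_mod_cast h3
    refine ⟨by nlinarith, fun h => ?_⟩
    have : (C (k+1) : ℝ) ≤ 1 := by nlinarith
    have : C (k+1) ≤ 1 := by exact_mod_cast this
    omega
  have gup : ∀ j, j ≤ m → g j ≤ (j:ℝ) * (2*m+8-j) := by
    intro j
    induction j with
    | zero => intro _; simp [g0]
    | succ j ih =>
      intro hj
      have h1 := ih (by omega)
      have h2 := (step j (by omega)).1
      push_cast
      nlinarith
  -- the top three
  have top : (g (m+1) + g (m+2) + g (m+3) ≤ 3 * g m + 25) ∧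
      (g (m+1) + g (m+2) + g (m+3) = 3 * g m + 25 → 
        w (m+3) (m+2) = 1 ∧ w (m+2) (m+1) = 1 ∧ w (m+3) (m+1) = 1 ∧ C (m+1) = 1) := by
    have c3 := cut (m+1) (by omega) (by omega)
    have c2 := cut (m+2) (by omega) (by omega)
    have c1 := cut (m+3) (by omega) (by omega)
    have ex2 := rc_cut (m+4) (m+2) (by omega) (by omega) w g hsym hdiag heq
    have ex1 := rc_cut (m+4) (m+3) (by omega) (by omega) w g hsym hdiag heq
    have ic : ∀ (F : ℕ → ℕ), ∑ i ∈ Ico (m+1) (m+4), F i = F (m+1) + F (m+2) + F (m+3) := by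
      intro F
      rw [Finset.sum_Ico_succ_top (by omega), Finset.sum_Ico_succ_top (by omega),
        Finset.sum_Ico_succ_top (by omega)]; simp
    have ic2 : ∀ (F : ℕ → ℕ), ∑ i ∈ Ico (m+2) (m+4), F i = F (m+2) + F (m+3) := by
      intro F
      rw [Finset.sum_Ico_succ_top (by omega), Finset.sum_Ico_succ_top (by omega)]; simp
    have ic1 : ∀ (F : ℕ → ℕ), ∑ i ∈ Ico (m+3) (m+4), F i = F (m+3) := by
      intro F
      rw [Finset.sum_Ico_succ_top (by omega)]; simp
    have rc2 : ∀ (F : ℕ → ℝ), ∑ i ∈ Ico (m+2) (m+4), F i = F (m+2) + F (m+3) := by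
      intro F
      rw [Finset.sum_Ico_succ_top (by omega), Finset.sum_Ico_succ_top (by omega)]; simp
    have rc1 : ∀ (F : ℕ → ℝ), ∑ i ∈ Ico (m+3) (m+4), F i = F (m+3) := by
      intro F
      rw [Finset.sum_Ico_succ_top (by omega)]; simp
    have p1 : 1 ≤ b (m+1) := hb _ (by omega) (by omega)
    have p2 : 1 ≤ b (m+2) := hb _ (by omega) (by omega)
    have p3 : 1 ≤ b (m+3) := hb _ (by omega) (by omega)
    have B3 : B (m+1) = b (m+1) + b (m+2) + b (m+3) := ic _
    have B2 : B (m+2) = b (m+2) + b (m+3) := ic2 _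
    have B1 : B (m+3) = b (m+3) := ic1 _
    have C1 : C (m+3) = b (m+3) := ic1 _
    have b2 : b (m+2) = (∑ j ∈ range (m+1), w (m+2) j) + w (m+2) (m+1) :=
      Finset.sum_range_succ _ _
    have b3 : b (m+3) = (∑ j ∈ range (m+1), w (m+3) j) + w (m+3) (m+1) + w (m+3) (m+2) := by
      simp only [hbdef]; rw [Finset.sum_range_succ, Finset.sum_range_succ]
    have C2 : C (m+2) = b (m+2) + ((∑ j ∈ range (m+1), w (m+3) j) + w (m+3) (m+1)) := by
      simp only [hC]; rw [ic2]; rw [Finset.sum_range_succ (fun j => w (m+3) j)]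
    have C3 : C (m+1) = b (m+1) + (∑ j ∈ range (m+1), w (m+2) j) + ∑ j ∈ range (m+1), w (m+3) j :=
      ic _
    have bu := Bup m (by omega)
    have q1 := hw (m+3) (m+2)
    have q2 := hw (m+3) (m+1)
    have q3 := hw (m+2) (m+1)
    have cp2 := Cpos (m+2) (by omega) (by omega)
    have mo1 := mono m (m+1) (by omega) (by omega)
    have mo2 := mono (m+1) (m+2) (by omega) (by omega)
    have mo3 := mono (m+2) (m+3) (by omega) (by omega)
    have s1 : m + 1 - 1 = m := rfl
    have s2 : m + 2 - 1 = m + 1 := rfl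
    have s3 : m + 3 - 1 = m + 2 := rfl
    rw [s1] at c3
    rw [s2] at c2
    rw [s3] at c1
    have d1 : g (m+3) - g (m+2) ≤ 1 := by
      rw [C1, B1] at c1
      have : (1:ℝ) ≤ b (m+3) := by exact_mod_cast p3
      nlinarith
    have key2 : ∀ β γ : ℕ, B (m+2) ≤ β → γ ≤ C (m+2) → 1 ≤ γ →
        (γ:ℝ) * (g (m+2) - g (m+1)) ≤ 2 * β - γ := by
      intro β γ h1 h2 h3
      have h1' : (B (m+2) : ℝ) ≤ β := by exact_mod_cast h1
      have h2' : (γ : ℝ) ≤ C (m+2) := by exact_mod_cast h2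
      nlinarith
    have key3 : ∀ β γ : ℕ, B (m+1) ≤ β → γ ≤ C (m+1) → 1 ≤ γ →
        (γ:ℝ) * (g (m+1) - g m) ≤ 2 * β - γ := by
      intro β γ h1 h2 h3
      have h1' : (B (m+1) : ℝ) ≤ β := by exact_mod_cast h1
      have h2' : (γ : ℝ) ≤ C (m+1) := by exact_mod_cast h2
      nlinarith
    by_cases hC2 : 2 ≤ C (m+1)
    · have k3 := key3 4 2 (by omega) hC2 (by norm_num)
      have k2 := key2 3 1 (by omega) cp2 (by norm_num)
      push_cast at k2 k3
      exact ⟨by linarith, fun h => by linarith⟩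
    · by_cases hS : B (m+1) ≤ 3
      · have k3 := key3 3 1 hS (by omega) (by norm_num)
        have k2 := key2 2 1 (by omega) cp2 (by norm_num)
        push_cast at k2 k3
        exact ⟨by linarith, fun h => by linarith⟩
      · have z2 : ∑ j ∈ range (m+1), w (m+2) j = 0 := by omega
        have z3 : ∑ j ∈ range (m+1), w (m+3) j = 0 := by omega
        have a1 : w (m+3) (m+2) = 1 := by omega
        have a2 : w (m+3) (m+1) = 1 := by omega
        have a3 : w (m+2) (m+1) = 1 := by omega
        have k3 := key3 4 1 (by omega) (by omega) (by norm_num)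
        have y2 : ∀ j ∈ range (m+1), w (m+2) j = 0 := fun j hj => (Finset.sum_eq_zero_iff.1 z2) j hj
        have y3 : ∀ j ∈ range (m+1), w (m+3) j = 0 := fun j hj => (Finset.sum_eq_zero_iff.1 z3) j hj
        have r2 : ∀ F : ℕ → ℝ, ∑ j ∈ range (m+1), (w (m+2) j : ℝ) * F j = 0 := fun F =>
          Finset.sum_eq_zero fun j hj => by rw [y2 j hj]; simp
        have r3 : ∀ F : ℕ → ℝ, ∑ j ∈ range (m+1), (w (m+3) j : ℝ) * F j = 0 := fun F =>
          Finset.sum_eq_zero fun j hj => by rw [y3 j hj]; simp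
        have ex1' : ∑ i ∈ Ico (m+3) (m+4), ∑ j ∈ range (m+3), (w i j : ℝ) * (g i - g j) 
          = 2 * (B (m+3) : ℝ) - (C (m+3) : ℝ) := ex1
        have ex2' : ∑ i ∈ Ico (m+2) (m+4), ∑ j ∈ range (m+2), (w i j : ℝ) * (g i - g j) 
          = 2 * (B (m+2) : ℝ) - (C (m+2) : ℝ) := ex2
        rw [rc1, Finset.sum_range_succ, Finset.sum_range_succ, r3, a1, a2,
          show B (m+3) = 2 by omega, show C (m+3) = 2 by omega] at ex1'
        rw [rc2, Finset.sum_range_succ (fun j => (w (m+2) j : ℝ) * (g (m+2) - g j)),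
          Finset.sum_range_succ (fun j => (w (m+3) j : ℝ) * (g (m+3) - g j)), r2, r3, a2, a3,
          show B (m+2) = 3 by omega, show C (m+2) = 2 by omega] at ex2'
        push_cast at ex1' ex2' k3
        refine ⟨by linarith, fun _ => ⟨a1, a3, a2, by omega⟩⟩
  have tot : ∑ i ∈ range (m+4), g i = (∑ i ∈ range (m+1), g i) + (g (m+1) + g (m+2) + g (m+3)) := by
    rw [Finset.sum_range_succ, Finset.sum_range_succ, Finset.sum_range_succ]; ring
  have low : ∑ i ∈ range (m+1), g i ≤ ∑ j ∈ range (m+1), (j:ℝ) * (2*m+8-j) :=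
    Finset.sum_le_sum fun j hj => gup j (by have := Finset.mem_range.1 hj; omega)
  have gm := gup m le_rfl
  rw [← rc_formula, tot]
  refine ⟨by linarith [top.1], fun h => ?_⟩
  have t1 := top.1
  have hgm : g m = (m:ℝ) * (2*m+8-m) := by linarith
  have h25 := top.2 (by linarith)
  refine ⟨h25.1, h25.2.1, h25.2.2.1, ?_⟩
  have down : ∀ d, d ≤ m → g (m-d) = ((m-d : ℕ):ℝ) * (2*m+8-((m-d : ℕ):ℝ)) := by
    intro d
    induction d with
    | zero => intro _; simpa using hgm
    | succ d ih =>
      intro hd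
      have h1 := ih (by omega)
      have h2 := gup (m-(d+1)) (by omega)
      have h3 := (step (m-(d+1)) (by omega)).1
      have e : m - d = m - (d+1) + 1 := by omega
      rw [e] at h1
      push_cast at h1
      apply le_antisymm h2
      nlinarith
  have all : ∀ j, j ≤ m → g j = (j:ℝ) * (2*m+8-j) := by
    intro j hj
    have := down (m-j) (by omega)
    rwa [show m - (m-j) = j by omega] at this
  intro k hk1 hk2
  rcases Nat.lt_or_ge k (m+1) with h | h
  · obtain ⟨j, rfl⟩ : ∃ j, k = j+1 := ⟨k-1, by omega⟩
    apply (step j (by omega)).2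
    rw [all (j+1) (by omega), all j (by omega)]
    push_cast; ring
  · have : k = m+1 := by omega
    rw [this]; exact h25.2.2.2

theorem rc_key_all (n : ℕ) (hn3 : 3 ≤ n) (w : ℕ → ℕ → ℕ) (g : ℕ → ℝ)
    (hsym : ∀ i j, w i j = w j i) (hw : ∀ i j, w i j ≤ 1) (hdiag : ∀ i, w i i = 0)
    (g0 : g 0 = 0)
    (mono : ∀ i j, i ≤ j → j < n → g i ≤ g j)
    (heq : ∀ i, 1 ≤ i → i < n → ∑ j ∈ range n, (w i j : ℝ) * (g i - g j - 1) = 0)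
    (hb : ∀ i, 1 ≤ i → i < n → 1 ≤ ∑ j ∈ range i, w i j)
    (htot : ∑ i ∈ range n, ∑ j ∈ range i, w i j = n) :
    ∑ i ∈ range n, g i ≤ (n : ℝ) * ((n : ℝ)-1)*(4*(n : ℝ)+1)/6 - 9 ∧
    (∑ i ∈ range n, g i = (n : ℝ) * ((n : ℝ)-1)*(4*(n : ℝ)+1)/6 - 9 →
      ∀ i j, j < i → i < n → (w i j = 1 ↔ i = j + 1 ∨ (i + 1 = n ∧ j + 3 = n))) := by
  rcases Nat.lt_or_ge n 4 with h | h
  · obtain rfl : n = 3 := by omega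
    obtain ⟨h1, h2, h3, h4⟩ := rc_key3 w g hsym hw hdiag g0 heq htot
    refine ⟨by rw [h1]; norm_num, fun _ i j hji hi => ?_⟩
    have : (i = 1 ∧ j = 0) ∨ (i = 2 ∧ j = 0) ∨ (i = 2 ∧ j = 1) := by omega
    rcases this with ⟨rfl, rfl⟩ | ⟨rfl, rfl⟩ | ⟨rfl, rfl⟩ <;> simp [h2, h3, h4]
  · obtain ⟨m, rfl⟩ : ∃ m, n = m + 4 := ⟨n - 4, by omega⟩
    obtain ⟨h1, h2⟩ := rc_key m w g hsym hw hdiag g0 mono heq hb htot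
    refine ⟨h1, fun he i j hji hi => ?_⟩
    obtain ⟨a1, a2, a3, hC⟩ := h2 he
    have zero : ∀ i j, j ≤ m → j + 1 < i → i < m + 4 → w i j = 0 := by
      intro i j hj hi hin
      by_contra hne
      have c := hC (j+1) (by omega) (by omega)
      have b1 := hb (j+1) (by omega) (by omega)
      have : ∑ l ∈ ({j+1, i} : Finset ℕ), ∑ t ∈ range (j+1), w l t ≤
          ∑ l ∈ Ico (j+1) (m+4), ∑ t ∈ range (j+1), w l t := by
        apply Finset.sum_le_sum_of_subset
        intro l hl
        simp only [Finset.mem_insert, Finset.mem_singleton] at hl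
        rw [Finset.mem_Ico]
        omega
      rw [Finset.sum_pair (by omega), c] at this
      have h3 : w i j ≤ ∑ t ∈ range (j+1), w i t :=
        Finset.single_le_sum (f := fun t => w i t) (fun _ _ => Nat.zero_le _)
          (Finset.mem_range.2 (by omega))
      omega
    constructor
    · intro hwij
      by_contra hcon
      have := zero i j (by omega) (by omega) hi
      omega
    · rintro (rfl | ⟨h3, h4⟩)
      · rcases Nat.lt_or_ge j (m+1) with hj | hj
        · have b1 := hb (j+1) (by omega) (by omega)
          rw [Finset.sum_range_succ, Finset.sum_eq_zero] at b1
          · have := hw (j+1) j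
            omega
          · intro t ht
            have := Finset.mem_range.1 ht
            exact zero _ _ (by omega) (by omega) (by omega)
        · have : j = m+1 ∨ j = m+2 := by omega
          rcases this with rfl | rfl
          · exact a2
          · exact a1
      · obtain rfl : i = m+3 := by omega
        obtain rfl : j = m+1 := by omega
        exact a3

theorem rc_tri (w : ℕ → ℕ → ℕ) (hsym : ∀ i j, w i j = w j i) (hdiag : ∀ i, w i i = 0) (N : ℕ) :
    (∑ i ∈ range N, ∑ j ∈ range N, w i j) = 2 * ∑ i ∈ range N, ∑ j ∈ range i, w i j := by
  induction N with
  | zero => simp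
  | succ N ih =>
    rw [Finset.sum_range_succ, Finset.sum_range_succ (f := fun i => ∑ j ∈ range i, w i j),
      mul_add, ← ih]
    simp only [Finset.sum_range_succ]
    rw [Finset.sum_add_distrib, hdiag]
    have : ∑ i ∈ range N, w i N = ∑ j ∈ range N, w N j :=
      Finset.sum_congr rfl fun i _ => hsym _ _
    rw [this]; ring

theorem rc_two_edges [Fintype V] (G : SimpleGraph V) :
    (∑ u, ∑ v, if G.Adj u v then 1 else 0) = 2 * esize G := by
  have h := G.sum_degrees_eq_twice_card_edges
  have h2 : esize G = G.edgeFinset.card := by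
    unfold esize
    rw [Nat.card_eq_fintype_card, SimpleGraph.edgeFinset_card]
  rw [h2, ← h]
  refine Finset.sum_congr rfl fun u _ => ?_
  rw [← SimpleGraph.card_neighborFinset_eq_degree, SimpleGraph.neighborFinset_eq_filter]
  simp

theorem rc_hit_eq [Fintype V] (G : SimpleGraph V) (hc : G.Connected) (x : V) :
    hitting G x x = 0 ∧ ∀ u, u ≠ x →
      (∑ v, if G.Adj u v then hitting G u x - hitting G v x else 0) = degR G u := by
  obtain ⟨f, hx, hf⟩ := rc_exists G hc x
  have h := rc_hit G hc x f hx hf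
  simp only [h]
  exact ⟨hx, hf⟩

theorem rc_hit_lb [Fintype V] (G : SimpleGraph V) (hc : G.Connected) (x : V) (u : V) (hu : u ≠ x)
    (c : ℝ) (h : ∀ v, G.Adj u v → c ≤ hitting G v x) : c + 1 ≤ hitting G u x := by
  have h1 := (rc_hit_eq G hc x).2 u hu
  have hd := rc_deg_pos G hc x u hu
  have : (∑ v, if G.Adj u v then hitting G u x - hitting G v x else 0) ≤
      ∑ v, (if G.Adj u v then (1:ℝ) else 0) * (hitting G u x - c) := by
    refine Finset.sum_le_sum fun v _ => ?_
    split_ifs with hv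
    · have := h v hv; linarith
    · simp
  rw [h1, ← Finset.sum_mul, rc_sum_one] at this
  nlinarith

theorem rc_hit_nonneg [Fintype V] (G : SimpleGraph V) (hc : G.Connected) (x : V) (u : V) :
    0 ≤ hitting G u x := by
  obtain ⟨hx, hf⟩ := rc_hit_eq G hc x
  exact rc_minP G hc x (fun u => hitting G u x) hx.ge
    (fun u hu => by rw [hf u hu]; exact (rc_deg_pos G hc x u hu).le) u

theorem rc_lower_nb [Fintype V] (G : SimpleGraph V) (hc : G.Connected) (x : V) (u : V)
    (hu : u ≠ x) : ∃ v, G.Adj u v ∧ hitting G v x < hitting G u x := by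
  by_contra hcon
  push Not at hcon
  have := rc_hit_lb G hc x u hu _ hcon
  linarith

theorem rc_upper [Fintype V] (G : SimpleGraph V) (n : ℕ)
    (hn : Fintype.card V = n) (hn3 : 3 ≤ n)
    (hconn : G.Connected) (huni : esize G = n) (x : V) :
    reverseCoverCost G x ≤ (n : ℝ)*((n : ℝ)-1)*(4*(n : ℝ)+1)/6 - 9 ∧
    (reverseCoverCost G x = (n : ℝ)*((n : ℝ)-1)*(4*(n : ℝ)+1)/6 - 9 →
      ∃ e : Fin n ≃ V, e ⟨0, by omega⟩ = x ∧ ∀ i j : Fin n, j.val < i.val →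
        (G.Adj (e i) (e j) ↔ i.val = j.val + 1 ∨ (i.val + 1 = n ∧ j.val + 3 = n))) := by
  set h : V → ℝ := fun u => hitting G u x with hh
  obtain ⟨hx, hf⟩ := rc_hit_eq G hconn x
  set e0 : Fin n ≃ V := (Fintype.equivFinOfCardEq hn).symm with he0
  set e : Fin n ≃ V := (Tuple.sort (h ∘ e0)).trans e0 with he
  have hmono : Monotone (h ∘ e) := Tuple.monotone_sort (h ∘ e0)
  have elow : ∀ i : Fin n, e i ≠ x → ∃ j : Fin n, j < i ∧ G.Adj (e i) (e j) := by
    intro i hi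
    obtain ⟨v, hv, hlt⟩ := rc_lower_nb G hconn x (e i) hi
    refine ⟨e.symm v, ?_, by simpa using hv⟩
    by_contra hcon
    have := hmono (not_lt.1 hcon)
    simp only [Function.comp, Equiv.apply_symm_apply] at this
    have hlt' : h v < h (e i) := hlt
    linarith
  have ez : e ⟨0, by omega⟩ = x := by
    by_contra hne
    obtain ⟨j, hj, _⟩ := elow _ hne
    exact absurd hj (by simp [Fin.lt_def])
  set w : ℕ → ℕ → ℕ := fun i j => if hij : i < n ∧ j < n then
    (if G.Adj (e ⟨i, hij.1⟩) (e ⟨j, hij.2⟩) then 1 else 0) else 0 with hw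
  set g : ℕ → ℝ := fun i => if hi : i < n then h (e ⟨i, hi⟩) else 0 with hg
  have wf : ∀ i j : Fin n, w i j = if G.Adj (e i) (e j) then 1 else 0 := by
    intro i j; simp [hw]
  have gf : ∀ i : Fin n, g i = h (e i) := by intro i; simp [hg]
  have hsym : ∀ i j, w i j = w j i := by
    intro i j
    simp only [hw, G.adj_comm, and_comm]
  have hdiag : ∀ i, w i i = 0 := by intro i; simp [hw]
  have sumg : ∑ i ∈ range n, g i = reverseCoverCost G x := by
    rw [Finset.sum_range]
    simp only [gf]
    exact Equiv.sum_comp e h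
  have htot : ∑ i ∈ range n, ∑ j ∈ range i, w i j = n := by
    have t := rc_tri w hsym hdiag n
    have t2 : (∑ i ∈ range n, ∑ j ∈ range n, w i j) = 2 * n := by
      rw [Finset.sum_range]
      simp only [Finset.sum_range, wf]
      have q := rc_two_edges G
      rw [huni] at q
      rw [← q, ← Equiv.sum_comp e]
      refine Finset.sum_congr rfl fun i _ => ?_
      exact Equiv.sum_comp e (fun v => if G.Adj (e i) v then 1 else 0)
    omega
  have nex : ∀ i (hi : i < n), 1 ≤ i → e ⟨i, hi⟩ ≠ x := by
    intro i hi h1 hcon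
    rw [← ez] at hcon
    have := e.injective hcon
    simp at this
    omega
  have key := rc_key_all n hn3 w g hsym
    (by intro i j; simp only [hw]; split_ifs <;> omega) hdiag
    (by
      have := gf ⟨0, by omega⟩
      simp only at this
      rw [this, ez]; exact hx)
    (by
      intro i j hij hj
      have := hmono (show (⟨i, by omega⟩ : Fin n) ≤ ⟨j, hj⟩ from hij)
      have a := gf ⟨i, by omega⟩
      have b := gf ⟨j, hj⟩
      simp only at a b
      rw [a, b]; exact this)
    (by
      intro i h1 hi
      rw [Finset.sum_range]
      have := hf (e ⟨i, hi⟩) (nex i hi h1)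
      rw [← rc_sum_one, ← sub_eq_zero, ← Finset.sum_sub_distrib, ← Equiv.sum_comp e] at this
      rw [← this]
      refine Finset.sum_congr rfl fun j _ => ?_
      have a := gf ⟨i, hi⟩
      have b := wf ⟨i, hi⟩ j
      simp only at a b
      rw [a, b, gf]
      split_ifs <;> simp [hh])
    (by
      intro i h1 hi
      obtain ⟨j, hj, hadj⟩ := elow ⟨i, hi⟩ (nex i hi h1)
      have b := wf ⟨i, hi⟩ j
      simp only at b
      rw [if_pos hadj] at b
      rw [← b]
      exact Finset.single_le_sum (f := fun t => w i t) (fun _ _ => Nat.zero_le _)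
        (Finset.mem_range.2 (by simpa [Fin.lt_def] using hj)))
    htot
  rw [sumg] at key
  refine ⟨key.1, fun hE => ⟨e, ez, fun i j hij => ?_⟩⟩
  rw [← key.2 hE i j hij i.2, wf]
  split_ifs with hA <;> simp [hA]

theorem rc_lower [Fintype V] (G : SimpleGraph V) (n : ℕ)
    (hn : Fintype.card V = n) (hn3 : 3 ≤ n)
    (hconn : G.Connected) (huni : esize G = n) (x : V) :
    (n : ℝ) + 1 ≤ reverseCoverCost G x ∧
    (reverseCoverCost G x = (n : ℝ) + 1 ↔ ∀ v, v ≠ x → G.Adj x v) := by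
  obtain ⟨hx, hf⟩ := rc_hit_eq G hconn x
  set h : V → ℝ := fun u => hitting G u x with hh
  have hdeg : ∑ u, degR G u = 2 * n := by
    have := rc_two_edges G
    rw [huni] at this
    simp only [← rc_sum_one]
    exact_mod_cast this
  have anti : ∑ u, ∑ v, (if G.Adj u v then h u - h v else 0) = 0 := by
    have h1 : ∑ u, ∑ v, (if G.Adj u v then h u - h v else 0) =
        - ∑ u, ∑ v, (if G.Adj u v then h u - h v else 0) := by
      conv_lhs => rw [Finset.sum_comm]
      rw [← Finset.sum_neg_distrib]
      refine Finset.sum_congr rfl fun i _ => ?_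
      rw [← Finset.sum_neg_distrib]
      refine Finset.sum_congr rfl fun j _ => ?_
      simp only [G.adj_comm j i]
      split_ifs <;> ring
    linarith
  have hnb : (∑ v, if G.Adj x v then h v else 0) = 2 * n - degR G x := by
    rw [← Finset.add_sum_erase _ _ (Finset.mem_univ x)] at anti hdeg
    have e1 : ∑ u ∈ Finset.univ.erase x, ∑ v, (if G.Adj u v then h u - h v else 0) =
        ∑ u ∈ Finset.univ.erase x, degR G u :=
      Finset.sum_congr rfl fun u hu => hf u (Finset.ne_of_mem_erase hu)
    have e2 : (∑ v, if G.Adj x v then h x - h v else 0) = - ∑ v, if G.Adj x v then h v else 0 := by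
      rw [← Finset.sum_neg_distrib]
      refine Finset.sum_congr rfl fun v _ => ?_
      have : h x = 0 := hx
      rw [this]
      split_ifs <;> ring
    rw [e1, e2] at anti
    linarith
  have one : ∀ u, u ≠ x → 1 ≤ h u := fun u hu => by
    have := rc_hit_lb G hconn x u hu 0 (fun v _ => rc_hit_nonneg G hconn x v)
    simpa using this
  have two : ∀ u, u ≠ x → ¬ G.Adj x u → 2 ≤ h u := fun u hu hna => by
    have := rc_hit_lb G hconn x u hu 1 (fun v hv => one v (by rintro rfl; exact hna hv.symm))
    have h' : (1:ℝ) + 1 ≤ h u := this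
    linarith
  have dsum : degR G x + (∑ v, if v ≠ x ∧ ¬ G.Adj x v then (1:ℝ) else 0) = n - 1 := by
    have h1 : (∑ v : V, if v = x then (1:ℝ) else 0) = 1 := by simp
    have h2 : ∑ v : V, (1:ℝ) = n := by simp [hn]
    have key : (∑ v, if G.Adj x v then (1:ℝ) else 0) +
        (∑ v, if v ≠ x ∧ ¬ G.Adj x v then (1:ℝ) else 0) +
        (∑ v, if v = x then (1:ℝ) else 0) = ∑ v : V, (1:ℝ) := by
      rw [← Finset.sum_add_distrib, ← Finset.sum_add_distrib]
      refine Finset.sum_congr rfl fun v _ => ?_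
      by_cases h1 : v = x
      · subst h1; simp
      · by_cases h3 : G.Adj x v <;> simp [h1, h3]
    rw [h1, h2, rc_sum_one] at key
    linarith
  have rc : 2 * n - degR G x + 2 * (∑ v, if v ≠ x ∧ ¬ G.Adj x v then (1:ℝ) else 0) ≤
      reverseCoverCost G x := by
    rw [← hnb, Finset.mul_sum, ← Finset.sum_add_distrib]
    unfold reverseCoverCost
    refine Finset.sum_le_sum fun v _ => ?_
    change _ ≤ h v
    by_cases h1 : v = x
    · subst h1
      have : h v = 0 := hx
      simp [this]
    · by_cases h3 : G.Adj x v
      · simp [h3]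
      · have := two v h1 h3
        simp [h1, h3, this]
  have nn : 0 ≤ (∑ v, if v ≠ x ∧ ¬ G.Adj x v then (1:ℝ) else 0) :=
    Finset.sum_nonneg fun v _ => by split_ifs <;> norm_num
  refine ⟨by linarith, fun hE => ?_, fun hall => ?_⟩
  · have hz : (∑ v, if v ≠ x ∧ ¬ G.Adj x v then (1:ℝ) else 0) = 0 := by linarith
    rw [Finset.sum_eq_zero_iff_of_nonneg (fun v _ => by split_ifs <;> norm_num)] at hz
    intro v hv
    have := hz v (Finset.mem_univ v)
    by_contra hna
    simp [hv, hna] at this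
  · have hz : (∑ v, if v ≠ x ∧ ¬ G.Adj x v then (1:ℝ) else 0) = 0 :=
      Finset.sum_eq_zero fun v _ => if_neg (by rintro ⟨h1, h2⟩; exact h2 (hall v h1))
    have : reverseCoverCost G x = 2 * n - degR G x := by
      rw [← hnb]
      unfold reverseCoverCost
      refine Finset.sum_congr rfl fun v _ => ?_
      change h v = _
      by_cases h1 : v = x
      · subst h1
        have : h v = 0 := hx
        simp [this]
      · simp [hall v h1]
    linarith

theorem rc_star_iso [Fintype V] (G : SimpleGraph V) (n : ℕ)
    (hn : Fintype.card V = n) (hn3 : 3 ≤ n)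
    (huni : esize G = n) (x : V) (hall : ∀ v, v ≠ x → G.Adj x v) :
    Nonempty (starCycle n 3 ≃g G) := by
  have tot := rc_two_edges G
  rw [huni] at tot
  set P : Finset (V × V) := Finset.univ.filter fun p => p.1 ≠ x ∧ p.2 ≠ x ∧ G.Adj p.1 p.2 with hP
  have hPc : P.card = 2 := by
    have e1 : P.card = ∑ u, ∑ v, if (u ≠ x ∧ v ≠ x ∧ G.Adj u v) then 1 else 0 := by
      rw [hP, Finset.card_filter, Fintype.sum_prod_type]
    have sx : (∑ u : V, if u ≠ x then 1 else 0) = n - 1 := by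
      rw [← Finset.card_filter, Finset.filter_ne', Finset.card_erase_of_mem (Finset.mem_univ x),
        Finset.card_univ, hn]
    have e2 : (∑ u, ∑ v, if G.Adj u v then 1 else 0) =
        (∑ u, ∑ v, if (u ≠ x ∧ v ≠ x ∧ G.Adj u v) then 1 else 0) +
        ((∑ u : V, if u ≠ x then 1 else 0) + (∑ u : V, if u ≠ x then 1 else 0)) := by
      have a : (∑ u : V, if u ≠ x then 1 else 0) =
          ∑ u : V, ∑ v : V, if u = x ∧ v ≠ x then 1 else 0 := by
        rw [Finset.sum_comm]
        refine Finset.sum_congr rfl fun v _ => ?_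
        by_cases hv : v = x <;> simp [hv]
      have b : (∑ u : V, if u ≠ x then 1 else 0) =
          ∑ u : V, ∑ v : V, if v = x ∧ u ≠ x then 1 else 0 := by
        refine Finset.sum_congr rfl fun v _ => ?_
        by_cases hv : v = x <;> simp [hv]
      nth_rewrite 1 [a]
      rw [b, ← Finset.sum_add_distrib, ← Finset.sum_add_distrib]
      refine Finset.sum_congr rfl fun u _ => ?_
      rw [← Finset.sum_add_distrib, ← Finset.sum_add_distrib]
      refine Finset.sum_congr rfl fun v _ => ?_
      by_cases hu : u = x
      · by_cases hv : v = x
        · simp [hu, hv]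
        · simp [hu, hv, hall v hv]
      · by_cases hv : v = x
        · simp [hu, hv, (hall u hu).symm]
        · simp [hu, hv]
    omega
  obtain ⟨⟨a, b⟩, hab⟩ : P.Nonempty := by rw [← Finset.card_pos]; omega
  have hab' : a ≠ x ∧ b ≠ x ∧ G.Adj a b := by simpa [hP] using hab
  obtain ⟨hax, hbx, hadj⟩ := hab'
  have hne : a ≠ b := hadj.ne
  have hPe : ({(a, b), (b, a)} : Finset (V × V)) = P := by
    apply Finset.eq_of_subset_of_card_le
    · intro p hp
      simp only [Finset.mem_insert, Finset.mem_singleton] at hp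
      rcases hp with rfl | rfl
      · exact hab
      · simp [hP, hax, hbx, hadj.symm]
    · rw [hPc, Finset.card_pair]
      intro h
      exact hne (Prod.mk.inj h).1
  have hadjiff : ∀ u v, u ≠ x → v ≠ x → (G.Adj u v ↔ (u = a ∧ v = b) ∨ (u = b ∧ v = a)) := by
    intro u v hu hv
    have : (u, v) ∈ P ↔ G.Adj u v := by simp [hP, hu, hv]
    rw [← this, ← hPe]
    simp
  obtain ⟨g, hg⟩ := Finset.exists_equiv_extend_of_card_eq (α := Fin n) (β := V)
    (t := Finset.univ) (by simp [hn]) (s := Finset.univ.filter fun i : Fin n => i.val < 3)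
    (f := fun i => if i.val = 0 then x else if i.val = 1 then a else b)
    (by intro y _; exact Finset.mem_univ y)
    (by
      intro i hi j hj hij
      simp only [Finset.coe_filter, Finset.mem_univ, true_and, Set.mem_ofPred_eq] at hi hj
      apply Fin.ext
      simp only at hij
      split_ifs at hij <;> first | omega | (exfalso; first | exact hax hij | exact hbx hij | exact hne hij | exact hax hij.symm | exact hbx hij.symm | exact hne hij.symm))
  set e : Fin n ≃ V := g.trans (Equiv.subtypeUnivEquiv Finset.mem_univ) with he
  have ev : ∀ i, e i = (g i : V) := fun i => rfl
  have z0 : e ⟨0, by omega⟩ = x := by rw [ev, hg _ (by simp)]; simp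
  have z1 : e ⟨1, by omega⟩ = a := by rw [ev, hg _ (by simp)]; simp
  have z2 : e ⟨2, by omega⟩ = b := by rw [ev, hg _ (by simp)]; simp
  have i0 : ∀ i, e i = x ↔ i.val = 0 := by
    intro i; rw [← z0, e.apply_eq_iff_eq, Fin.ext_iff]
  have i1 : ∀ i, e i = a ↔ i.val = 1 := by
    intro i; rw [← z1, e.apply_eq_iff_eq, Fin.ext_iff]
  have i2 : ∀ i, e i = b ↔ i.val = 2 := by
    intro i; rw [← z2, e.apply_eq_iff_eq, Fin.ext_iff]
  refine ⟨⟨e, ?_⟩⟩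
  intro i j
  have hij : i ≠ j ↔ i.val ≠ j.val := by rw [Ne, Fin.ext_iff]
  simp only [starCycle, SimpleGraph.fromRel_adj, hij]
  by_cases hi : e i = x
  · have hi' := (i0 i).1 hi
    by_cases hj : e j = x
    · have hj' := (i0 j).1 hj
      rw [hi, hj]
      simp only [SimpleGraph.irrefl, false_iff]
      omega
    · have hj' : ¬ j.val = 0 := fun t => hj ((i0 j).2 t)
      rw [hi]
      simp only [hall _ hj, true_iff]
      omega
  · have hi' : ¬ i.val = 0 := fun t => hi ((i0 i).2 t)
    by_cases hj : e j = x
    · have hj' := (i0 j).1 hj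
      rw [hj]
      simp only [(hall _ hi).symm, true_iff]
      omega
    · have hj' : ¬ j.val = 0 := fun t => hj ((i0 j).2 t)
      rw [hadjiff _ _ hi hj, i1, i1, i2, i2]
      omega

theorem rc_lolli_iso [Fintype V] (G : SimpleGraph V) (n : ℕ) (hn3 : 3 ≤ n)
    (hconn : G.Connected) (x : V) (e : Fin n ≃ V) (e0 : e ⟨0, by omega⟩ = x)
    (hadj : ∀ i j : Fin n, j.val < i.val →
        (G.Adj (e i) (e j) ↔ i.val = j.val + 1 ∨ (i.val + 1 = n ∧ j.val + 3 = n))) :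
    ∃ e : lollipop n 3 ≃g G,
        distToSet G x ((fun i => e i) '' {i : Fin n | i.val < 3}) = n - 3 := by
  let π : Fin n ≃ Fin n :=
    { toFun := fun m => ⟨if 3 ≤ m.val then n - 1 - m.val else n - 3 + m.val, by
        have := m.2
        split_ifs <;> omega⟩
      invFun := fun i => ⟨if n ≤ i.val + 3 then i.val - (n - 3) else n - 1 - i.val, by
        have := i.2
        split_ifs <;> omega⟩
      left_inv := by
        intro m
        apply Fin.ext
        have := m.2
        dsimp only
        split_ifs <;> omega
      right_inv := by
        intro m
        apply Fin.ext
        have := m.2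
        dsimp only
        split_ifs <;> omega }
  have πv : ∀ m : Fin n, (π m).val = if 3 ≤ m.val then n - 1 - m.val else n - 3 + m.val :=
    fun m => rfl
  have hA : ∀ i j : Fin n, G.Adj (e i) (e j) ↔
      ((i.val = j.val + 1 ∨ (i.val + 1 = n ∧ j.val + 3 = n)) ∨
      (j.val = i.val + 1 ∨ (j.val + 1 = n ∧ i.val + 3 = n))) := by
    intro i j
    rcases lt_trichotomy i.val j.val with h | h | h
    · rw [G.adj_comm, hadj j i h]
      omega
    · rw [Fin.ext h]
      simp only [SimpleGraph.irrefl, false_iff]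
      omega
    · rw [hadj i j h]
      omega
  have lip : ∀ u v, ∀ p : G.Walk u v,
      min (e.symm v).val (n-3) ≤ min (e.symm u).val (n-3) + p.length := by
    intro u v p
    induction p with
    | nil => simp
    | @cons u' v' w' h p ih =>
      have h' := (hA (e.symm u') (e.symm v')).1 (by simpa using h)
      rw [SimpleGraph.Walk.length_cons]
      omega
  have up : ∀ k (hk : k + 3 ≤ n), G.dist x (e ⟨k, by omega⟩) ≤ k := by
    intro k
    induction k with
    | zero => intro hk; rw [e0]; simp
    | succ k ih =>
      intro hk
      have h1 := ih (by omega)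
      have h2 : G.dist (e ⟨k, by omega⟩) (e ⟨k+1, by omega⟩) = 1 := by
        rw [SimpleGraph.dist_eq_one_iff_adj, hA]
        simp
      have := hconn.dist_triangle (u := x) (v := e ⟨k, by omega⟩) (w := e ⟨k+1, by omega⟩)
      omega
  have low : ∀ i : Fin n, n ≤ i.val + 3 → n - 3 ≤ G.dist x (e i) := by
    intro i hi
    obtain ⟨p, hp⟩ := hconn.exists_walk_length_eq_dist x (e i)
    have := lip _ _ p
    have hz : e.symm x = ⟨0, by omega⟩ := by
      rw [Equiv.symm_apply_eq]; exact e0.symm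
    rw [hp, hz, e.symm_apply_apply] at this
    simp only at this
    omega
  refine ⟨⟨π.trans e, ?_⟩, ?_⟩
  · intro i j
    simp only [Equiv.trans_apply]
    rw [hA, πv, πv]
    have hij : i ≠ j ↔ i.val ≠ j.val := by rw [Ne, Fin.ext_iff]
    simp only [lollipop, SimpleGraph.fromRel_adj, hij]
    have := i.2
    have := j.2
    split_ifs <;> omega
  · have hmem : n - 3 ∈ {d | ∃ y ∈ ((fun i => (π.trans e) i) '' {i : Fin n | i.val < 3}),
        G.dist x y = d} := by
      refine ⟨_, ⟨⟨0, by omega⟩, by simp, rfl⟩, ?_⟩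
      have hp : π ⟨0, by omega⟩ = ⟨n-3, by omega⟩ := by
        apply Fin.ext; rw [πv]; simp
      simp only [Equiv.trans_apply, hp]
      apply le_antisymm
      · exact up (n-3) (by omega)
      · exact low _ (by show n ≤ n - 3 + 3; omega)
    change sInf {d | ∃ y ∈ ((fun i => (π.trans e) i) '' {i : Fin n | i.val < 3}),
        G.dist x y = d} = n - 3
    apply le_antisymm
    · exact Nat.sInf_le hmem
    · apply le_csInf ⟨_, hmem⟩
      rintro d ⟨y, ⟨i, hi, rfl⟩, rfl⟩
      simp only [Set.mem_ofPred_eq] at hi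
      apply low
      rw [πv, if_neg (by omega)]
      omega

theorem rc_lolli_end [Fintype V] (G : SimpleGraph V) (n : ℕ) (hn4 : 4 ≤ n)
    (hconn : G.Connected) (x : V) (e : lollipop n 3 ≃g G)
    (hd : distToSet G x ((fun i => e i) '' {i : Fin n | i.val < 3}) = n - 3) :
    x = e ⟨n-1, by omega⟩ := by
  obtain ⟨m, rfl⟩ := e.surjective x
  have le : ∀ i : Fin n, i.val < 3 → n - 3 ≤ G.dist (e m) (e i) := by
    intro i hi
    rw [← hd]
    exact Nat.sInf_le ⟨_, ⟨i, hi, rfl⟩, rfl⟩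
  have up : ∀ k (hk : k + 3 < n), G.dist (e ⟨k+3, hk⟩) (e ⟨0, by omega⟩) ≤ k + 1 := by
    intro k
    induction k with
    | zero =>
      intro hk
      have : G.dist (e ⟨0+3, hk⟩) (e ⟨0, by omega⟩) = 1 := by
        rw [SimpleGraph.dist_eq_one_iff_adj, e.map_adj_iff]
        simp [lollipop]
      omega
    | succ k ih =>
      intro hk
      have h1 := ih (by omega)
      have h2 : G.dist (e ⟨k+1+3, hk⟩) (e ⟨k+3, by omega⟩) = 1 := by
        rw [SimpleGraph.dist_eq_one_iff_adj, e.map_adj_iff]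
        simp [lollipop]
      have := hconn.dist_triangle (u := e ⟨k+1+3, hk⟩) (v := e ⟨k+3, by omega⟩)
        (w := e ⟨0, by omega⟩)
      omega
  congr 1
  apply Fin.ext
  rcases Nat.lt_or_ge m.val 3 with h | h
  · have := le m h
    rw [SimpleGraph.dist_self] at this
    omega
  · have h1 := up (m.val - 3) (by omega)
    have h2 : (⟨m.val - 3 + 3, by omega⟩ : Fin n) = m := Fin.ext (by simp; omega)
    rw [h2] at h1
    have := le ⟨0, by omega⟩ (by simp)
    have := m.2
    simp only
    omega

noncomputable def rcF (n : ℕ) (m : ℕ) : ℝ :=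
  if m = 0 then (n:ℝ)^2 - 9 else if m < 3 then (n:ℝ)^2 - 7 else (n:ℝ)^2 - ((m:ℝ)+1)^2

theorem rcF_sum (n : ℕ) (hn3 : 3 ≤ n) :
    ∑ i ∈ range n, rcF n i = (n : ℝ)*((n : ℝ)-1)*(4*(n : ℝ)+1)/6 - 9 := by
  have : ∀ M : ℕ, ∑ i ∈ range (M+3), rcF n i =
      (M+3) * (n:ℝ)^2 - ((M+3)*(M+4)*(2*M+7)/6) - 9 := by
    intro M
    induction M with
    | zero =>
      simp only [Finset.sum_range_succ, Finset.sum_range_zero, rcF]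
      norm_num
      ring
    | succ M ih =>
      rw [show M + 1 + 3 = (M + 3) + 1 by ring, Finset.sum_range_succ, ih]
      simp only [rcF]
      rw [if_neg (by omega), if_neg (by omega)]
      push_cast
      ring
  obtain ⟨M, rfl⟩ : ∃ M, n = M + 3 := ⟨n - 3, by omega⟩
  rw [this]
  push_cast
  ring

theorem rc_lolli_val [Fintype V] (G : SimpleGraph V) (n : ℕ) (hn4 : 4 ≤ n)
    (hconn : G.Connected) (e : lollipop n 3 ≃g G) :
    reverseCoverCost G (e ⟨n-1, by omega⟩) = (n : ℝ)*((n : ℝ)-1)*(4*(n : ℝ)+1)/6 - 9 := by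
  have hv : ∀ u, hitting G u (e ⟨n-1, by omega⟩) = rcF n (e.symm u).val := by
    apply rc_hit G hconn
    · rw [RelIso.symm_apply_apply]
      simp only [rcF]
      rw [if_neg (by omega)]
      have : ((n - 1 : ℕ) : ℝ) = (n:ℝ) - 1 := by rw [Nat.cast_sub (by omega)]; simp
      split_ifs
      · omega
      · rw [this]; ring
    · intro u hu
      obtain ⟨i, rfl⟩ := e.surjective u
      have hi : i.val ≠ n - 1 := by
        intro h
        exact hu (congrArg e (Fin.ext h))
      rw [← rc_sum_one, ← sub_eq_zero, ← Finset.sum_sub_distrib, ← Equiv.sum_comp e.toEquiv]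
      have : ∀ j : Fin n, ((if G.Adj (e i) (e.toEquiv j) then
          rcF n (e.symm (e i)).val - rcF n (e.symm (e.toEquiv j)).val else 0) -
          (if G.Adj (e i) (e.toEquiv j) then (1:ℝ) else 0)) =
          if (lollipop n 3).Adj i j then rcF n i.val - rcF n j.val - 1 else 0 := by
        intro j
        have h1 : e.toEquiv j = e j := rfl
        rw [h1, e.map_adj_iff, RelIso.symm_apply_apply, RelIso.symm_apply_apply]
        split_ifs <;> simp
      rw [Finset.sum_congr rfl fun j _ => this j, ← Finset.sum_filter]
      have hI := i.2
      have adjv : ∀ j : Fin n, (lollipop n 3).Adj i j ↔ 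
         (i.val ≠ j.val ∧ (((i.val + 1 = j.val ∧ j.val < 3) ∨ (i.val = 0 ∧ j.val = 3 - 1) ∨
          (i.val = 0 ∧ j.val = 3) ∨ (3 ≤ i.val ∧ i.val + 1 = j.val)) ∨
          ((j.val + 1 = i.val ∧ i.val < 3) ∨ (j.val = 0 ∧ i.val = 3 - 1) ∨
          (j.val = 0 ∧ i.val = 3) ∨ (3 ≤ j.val ∧ j.val + 1 = i.val)))) := by
        intro j
        have hij : i ≠ j ↔ i.val ≠ j.val := by rw [Ne, Fin.ext_iff]
        simp only [lollipop, SimpleGraph.fromRel_adj, hij]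
      have two : ∀ (a b : ℕ) (ha : a < n) (hb : b < n), a ≠ b →
          (∀ j : Fin n, (lollipop n 3).Adj i j ↔ j.val = a ∨ j.val = b) →
          ∑ j ∈ Finset.univ.filter (fun j => (lollipop n 3).Adj i j),
            (rcF n i.val - rcF n j.val - 1) =
          (rcF n i.val - rcF n a - 1) + (rcF n i.val - rcF n b - 1) := by
        intro a b ha hb hab h
        have : Finset.univ.filter (fun j => (lollipop n 3).Adj i j) = {⟨a, ha⟩, ⟨b, hb⟩} := by
          ext j
          simp [h, Fin.ext_iff]
        rw [this, Finset.sum_pair (by simpa using hab)]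
      rcases Nat.lt_or_ge i.val 4 with h4 | h4
      · have : i.val = 0 ∨ i.val = 1 ∨ i.val = 2 ∨ i.val = 3 := by omega
        rcases this with h | h | h | h
        · have hs : Finset.univ.filter (fun j => (lollipop n 3).Adj i j) =
              {⟨1, by omega⟩, ⟨2, by omega⟩, ⟨3, by omega⟩} := by
            ext j
            simp only [Finset.mem_filter, Finset.mem_univ, true_and, adjv, Finset.mem_insert,
              Finset.mem_singleton, Fin.ext_iff]
            omega
          rw [hs, Finset.sum_insert (by simp), Finset.sum_pair (by simp), h]
          simp only [rcF]
          norm_num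
        · rw [two 0 2 (by omega) (by omega) (by omega) (fun j => by rw [adjv]; omega), h]
          simp only [rcF]
          norm_num
        · rw [two 0 1 (by omega) (by omega) (by omega) (fun j => by rw [adjv]; omega), h]
          simp only [rcF]
          norm_num
        · rw [two 0 4 (by omega) (by omega) (by omega) (fun j => by rw [adjv]; omega), h]
          simp only [rcF]
          norm_num
      · obtain ⟨k, hk⟩ : ∃ k, i.val = k + 4 := ⟨i.val - 4, by omega⟩
        rw [two (k+3) (k+5) (by omega) (by omega) (by omega) (fun j => by rw [adjv]; omega), hk]
        simp only [rcF]
        rw [if_neg (by omega), if_neg (by omega), if_neg (by omega), if_neg (by omega),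
          if_neg (by omega), if_neg (by omega)]
        push_cast
        ring
  unfold reverseCoverCost
  simp only [hv]
  rw [← rcF_sum n (by omega), Finset.sum_range, ← Equiv.sum_comp e.toEquiv]
  refine Finset.sum_congr rfl fun j _ => ?_
  have h1 : e.toEquiv j = e j := rfl
  rw [h1, RelIso.symm_apply_apply]

/-- For an `n`-vertex unicyclic graph `G` and `x ∈ V(G)`,
`n+1 ≤ RC(x) ≤ n(n−1)(4n+1)/6 − 9`; equality on the left iff `G ≅ S_n^3` and
`deg(x) = n−1`; equality on the right iff `G ≅ P_n^3` and `x` is the vertex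
at distance `n−3` from the triangle. -/
theorem reverseCoverCost_bounds [Fintype V] (G : SimpleGraph V) (n : ℕ)
    (hn : Fintype.card V = n) (hn3 : 3 ≤ n)
    (hconn : G.Connected) (huni : esize G = n) (x : V) :
    (n : ℝ) + 1 ≤ reverseCoverCost G x ∧
    reverseCoverCost G x ≤ (n : ℝ)*((n : ℝ)-1)*(4*(n : ℝ)+1)/6 - 9 ∧
    (reverseCoverCost G x = (n : ℝ) + 1 ↔
      Nonempty (starCycle n 3 ≃g G) ∧ G.degree x = n - 1) ∧
    (reverseCoverCost G x = (n : ℝ)*((n : ℝ)-1)*(4*(n : ℝ)+1)/6 - 9 ↔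
      ∃ e : lollipop n 3 ≃g G,
        distToSet G x ((fun i => e i) '' {i : Fin n | i.val < 3}) = n - 3) := by
  have hlow := rc_lower G n hn hn3 hconn huni x
  have hup := rc_upper G n hn hn3 hconn huni x
  have hdeg : G.degree x = n - 1 ↔ ∀ v, v ≠ x → G.Adj x v := by
    rw [← SimpleGraph.card_neighborFinset_eq_degree]
    have hsub : G.neighborFinset x ⊆ Finset.univ.erase x := by
      intro v hv
      rw [SimpleGraph.mem_neighborFinset] at hv
      exact Finset.mem_erase.2 ⟨hv.ne', Finset.mem_univ _⟩
    have hcard : (Finset.univ.erase x).card = n - 1 := by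
      rw [Finset.card_erase_of_mem (Finset.mem_univ x), Finset.card_univ, hn]
    constructor
    · intro h v hv
      have := Finset.eq_of_subset_of_card_le hsub (by rw [h, hcard])
      rw [← SimpleGraph.mem_neighborFinset, this]
      exact Finset.mem_erase.2 ⟨hv, Finset.mem_univ _⟩
    · intro h
      rw [← hcard]
      congr 1
      apply Finset.Subset.antisymm hsub
      intro v hv
      rw [SimpleGraph.mem_neighborFinset]
      exact h v (Finset.ne_of_mem_erase hv)
  refine ⟨hlow.1, hup.1, ⟨fun h => ?_, fun h => ?_⟩, ⟨fun h => ?_, fun h => ?_⟩⟩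
  · have hall := hlow.2.1 h
    exact ⟨rc_star_iso G n hn hn3 huni x hall, hdeg.2 hall⟩
  · exact hlow.2.2 (hdeg.1 h.2)
  · obtain ⟨e, e0, he⟩ := hup.2 h
    exact rc_lolli_iso G n hn3 hconn x e e0 he
  · obtain ⟨e, he⟩ := h
    rcases Nat.lt_or_ge n 4 with h4 | h4
    · apply le_antisymm hup.1
      refine le_trans (le_of_eq ?_) hlow.1
      have : (n : ℝ) = 3 := by
        have : n = 3 := by omega
        rw [this]; norm_num
      rw [this]; norm_num
    · rw [rc_lolli_end G n h4 hconn x e he]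
      exact rc_lolli_val G n h4 hconn e
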